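/- No undersmoothing of the marginal maximum likelihood estimate (Cauchy slab): let α_1 be defined by d·α_1·m̃(α_1) = s_n/n for a small enough constant d > 0, and ζ_1 = ζ(α_1). Assume c_1·log²n ≤ s_n ≤ c_0·n. Then there exists a constant C > 0 such that sup_{θ ∈ ℓ0[s_n]} P_θ[ĥζ < ζ_1] ≤ exp(−C·s_n). -/

import Mathlib

/-!
Statement 10: no undersmoothing of the marginal maximum likelihood estimate,
spike and Cauchy slab prior.
-/

open MeasureTheory Real Set

noncomputable section

/-- Standard Cauchy density. -/
def cauchyDen (x : ℝ) : ℝ := (Real.pi * (1 + x ^ 2))⁻¹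


/-- Standard normal density. -/
def phi (x : ℝ) : ℝ := Real.exp (-x ^ 2 / 2) / Real.sqrt (2 * Real.pi)

/-- Standard Laplace density. -/
def lapDen (x : ℝ) : ℝ := Real.exp (-|x|) / 2

/-- Convolution `g = φ * γ`. -/
def conv (γ : ℝ → ℝ) (x : ℝ) : ℝ := ∫ u, phi (x - u) * γ u

/-- Posterior weight `a(x) = α g(x) / ((1-α) φ(x) + α g(x))`. -/
def aWt (γ : ℝ → ℝ) (α x : ℝ) : ℝ :=
  α * conv γ x / ((1 - α) * phi x + α * conv γ x)

/-- Density of the single-coordinate posterior with respect to `volume + δ₀`: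
the point mass `1 - a(x)` at `0`, and the continuous part `a(x) γ_x`. -/
def coordDen (γ : ℝ → ℝ) (α x u : ℝ) : ℝ :=
  if u = 0 then 1 - aWt γ α x else aWt γ α x * (phi (x - u) * γ u / conv γ x)

/-- Single-coordinate posterior `(1 - a(x)) δ₀ + a(x) G_x`. -/
def coordPost (γ : ℝ → ℝ) (α x : ℝ) : Measure ℝ :=
  (volume + Measure.dirac (0 : ℝ)).withDensity fun u => ENNReal.ofReal (coordDen γ α x u)

/-- The spike and slab posterior `Π_α[· | X]` on `ℝⁿ`, for a fixed weight `α`. -/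
def post (γ : ℝ → ℝ) (n : ℕ) (α : ℝ) (X : Fin n → ℝ) : Measure (Fin n → ℝ) :=
  Measure.pi fun i => coordPost γ α (X i)

/-- Law `P_θ` of the data `X`, `X_i = θ_i + ε_i` with `ε_i` i.i.d. `N(0,1)`. -/
def Pdata (n : ℕ) (θ : Fin n → ℝ) : Measure (Fin n → ℝ) :=
  Measure.pi fun i => ProbabilityTheory.gaussianReal (θ i) 1

/-- The class `ℓ₀[s]` of `s`-sparse vectors. -/
def ell0 (n s : ℕ) : Set (Fin n → ℝ) := {θ | Nat.card {i : Fin n // θ i ≠ 0} ≤ s}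

/-- Log-marginal likelihood `ℓ_n(α; X)`. -/
def logMarg (γ : ℝ → ℝ) {n : ℕ} (α : ℝ) (X : Fin n → ℝ) : ℝ :=
  ∑ i, Real.log ((1 - α) * phi (X i) + α * conv γ (X i))

/-- `0` is a median of the single-coordinate posterior distribution. -/
def medianZero (γ : ℝ → ℝ) (α x : ℝ) : Prop :=
  2⁻¹ ≤ coordPost γ α x (Set.Iic 0) ∧ 2⁻¹ ≤ coordPost γ α x (Set.Ici 0)

/-- `t` is the posterior median threshold function: for each `α ∈ (0,1)`,
`t α > 0` and the posterior median at observation `x` is `0` iff `|x| ≤ t α`. -/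
def IsThreshold (γ : ℝ → ℝ) (t : ℝ → ℝ) : Prop :=
  ∀ α ∈ Set.Ioo (0 : ℝ) 1, 0 < t α ∧ ∀ x : ℝ, (medianZero γ α x ↔ |x| ≤ t α)

/-- `hahat` is a marginal maximum likelihood empirical Bayes estimator of `α`,
with maximisation restricted to `[αn, 1]`. -/
def IsMMLE (γ : ℝ → ℝ) {n : ℕ} (αn : ℝ) (hahat : (Fin n → ℝ) → ℝ) : Prop :=
  Measurable hahat ∧ ∀ X : Fin n → ℝ, hahat X ∈ Set.Icc αn 1 ∧
    ∀ α ∈ Set.Icc αn 1, logMarg γ α X ≤ logMarg γ (hahat X) X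

/-- Expected posterior squared `L²`-moment
`E_{θ₀} ∫ ‖θ - θ₀‖² dΠ_{ĥα}(θ | X)` for the plug-in posterior. -/
def postRisk (γ : ℝ → ℝ) {n : ℕ} (hahat : (Fin n → ℝ) → ℝ) (θ0 : Fin n → ℝ) : ℝ :=
  ∫ X, (∫ θ, (∑ i, (θ i - θ0 i) ^ 2) ∂(post γ n (hahat X) X)) ∂(Pdata n θ0)

/-- `β(x) = g(x)/φ(x) - 1`. -/
def betaFn (γ : ℝ → ℝ) (x : ℝ) : ℝ := conv γ x / phi x - 1

/-- `m̃(α) = -E₀ β(X, α)`, `X ~ N(0,1)`, where `β(x,α) = β(x)/(1 + αβ(x))`. -/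
def mtilde (γ : ℝ → ℝ) (α : ℝ) : ℝ :=
  -∫ x, betaFn γ x / (1 + α * betaFn γ x) ∂(ProbabilityTheory.gaussianReal 0 1)

lemma phi_pos (x : ℝ) : 0 < phi x := by unfold phi; positivity

lemma cauchyDen_pos (x : ℝ) : 0 < cauchyDen x := by
  unfold cauchyDen; have := Real.pi_pos; positivity

lemma phi_eq_pdf : phi = ProbabilityTheory.gaussianPDFReal 0 1 := by
  funext x
  simp [phi, ProbabilityTheory.gaussianPDFReal, div_eq_inv_mul]

lemma phi_integrable : Integrable phi := by
  rw [phi_eq_pdf]; exact ProbabilityTheory.integrable_gaussianPDFReal 0 1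

lemma phi_integral : ∫ x, phi x = 1 := by
  rw [phi_eq_pdf]; exact ProbabilityTheory.integral_gaussianPDFReal_eq_one 0 (by simp)

lemma phi_anti {x y : ℝ} (h : |x| ≤ |y|) : phi y ≤ phi x := by
  unfold phi
  have := sq_le_sq.2 h
  gcongr

lemma phi_continuous : Continuous phi := by
  unfold phi; fun_prop

lemma cauchyDen_eq (x : ℝ) : cauchyDen x = π⁻¹ * (1 + x ^ 2)⁻¹ := by
  unfold cauchyDen; rw [mul_inv]

lemma cauchyDen_integrable : Integrable cauchyDen := by
  rw [funext cauchyDen_eq]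
  exact integrable_inv_one_add_sq.const_mul _

lemma cauchyDen_integral : ∫ x, cauchyDen x = 1 := by
  rw [funext cauchyDen_eq, integral_const_mul, integral_univ_inv_one_add_sq]
  exact inv_mul_cancel₀ Real.pi_ne_zero

lemma conv_integrand (x : ℝ) : Integrable (fun u => phi (x - u) * cauchyDen u) := by
  refine cauchyDen_integrable.bdd_mul (c := phi 0) ?_ ?_
  · exact (phi_continuous.comp (by fun_prop)).aestronglyMeasurable
  · refine ae_of_all _ fun u => ?_
    rw [Real.norm_of_nonneg (phi_pos _).le]
    exact phi_anti (by simp)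

lemma conv_as_convolution :
    conv cauchyDen = convolution cauchyDen phi (ContinuousLinearMap.mul ℝ ℝ) volume := by
  funext x
  simp [conv, convolution, mul_comm]

lemma conv_integrable : Integrable (conv cauchyDen) := by
  rw [conv_as_convolution]
  exact cauchyDen_integrable.integrable_convolution _ phi_integrable

lemma conv_integral : ∫ x, conv cauchyDen x = 1 := by
  rw [conv_as_convolution, integral_convolution _ cauchyDen_integrable phi_integrable,
    cauchyDen_integral, phi_integral]
  simp

lemma conv_measurable : Measurable (conv cauchyDen) := by
  have h : StronglyMeasurable (fun p : ℝ × ℝ => phi (p.1 - p.2) * cauchyDen p.2) := by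
    apply Measurable.stronglyMeasurable
    unfold phi cauchyDen
    fun_prop
  exact h.integral_prod_right.measurable

lemma conv_lower {x : ℝ} (hx : 0 ≤ x) : phi 1 * cauchyDen (x + 1) ≤ conv cauchyDen x := by
  calc phi 1 * cauchyDen (x + 1)
      = ∫ _u in Icc x (x + 1), phi 1 * cauchyDen (x + 1) := by simp
    _ ≤ ∫ u in Icc x (x + 1), phi (x - u) * cauchyDen u := by
        refine setIntegral_mono_on (integrableOn_const (by simp)) (conv_integrand x).integrableOn measurableSet_Icc ?_
        intro u hu
        have h1 : phi 1 ≤ phi (x - u) := by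
          apply phi_anti
          rw [abs_one, abs_le]
          constructor <;> linarith [hu.1, hu.2]
        have h2 : cauchyDen (x + 1) ≤ cauchyDen u := by
          unfold cauchyDen
          have := Real.pi_pos
          have : u ^ 2 ≤ (x + 1) ^ 2 := by nlinarith [hu.1, hu.2]
          gcongr
        exact mul_le_mul h1 h2 (cauchyDen_pos _).le (phi_pos _).le
    _ ≤ conv cauchyDen x := by
        refine setIntegral_le_integral (conv_integrand x) (ae_of_all _ fun u => ?_)
        exact mul_nonneg (phi_pos _).le (cauchyDen_pos _).le

lemma phi_shift (x u : ℝ) :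
    phi (x - u) + phi (x + u) = phi x * (2 * (Real.cosh (x * u) * Real.exp (-u ^ 2 / 2))) := by
  unfold phi
  rw [Real.cosh_eq]
  have e1 : Real.exp (-(x - u) ^ 2 / 2)
      = Real.exp (-x ^ 2 / 2) * (Real.exp (x * u) * Real.exp (-u ^ 2 / 2)) := by
    rw [← Real.exp_add, ← Real.exp_add]; congr 1; ring
  have e2 : Real.exp (-(x + u) ^ 2 / 2)
      = Real.exp (-x ^ 2 / 2) * (Real.exp (-(x * u)) * Real.exp (-u ^ 2 / 2)) := by
    rw [← Real.exp_add, ← Real.exp_add]; congr 1; ring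
  rw [e1, e2]
  ring

lemma conv_integrand' (x : ℝ) : Integrable (fun u => phi (x + u) * cauchyDen u) := by
  have := (conv_integrand x).comp_neg
  simpa [cauchyDen] using this

lemma cosh_integrable (x : ℝ) :
    Integrable (fun u => Real.cosh (x * u) * Real.exp (-u ^ 2 / 2) * cauchyDen u) := by
  have := ((conv_integrand x).add (conv_integrand' x)).const_mul ((2 * phi x)⁻¹)
  refine this.congr (ae_of_all _ fun u => ?_)
  have h := phi_shift x u
  have := (phi_pos x).ne'
  simp only [Pi.add_apply]
  rw [← add_mul, h]
  field_simp

lemma conv_ratio (x : ℝ) :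
    conv cauchyDen x / phi x =
      ∫ u, Real.cosh (x * u) * Real.exp (-u ^ 2 / 2) * cauchyDen u := by
  have h1 : conv cauchyDen x = ∫ u, phi (x + u) * cauchyDen u := by
    unfold conv
    rw [← integral_neg_eq_self (fun u => phi (x - u) * cauchyDen u)]
    simp [cauchyDen]
  have h2 : 2 * conv cauchyDen x = ∫ u, (phi (x - u) * cauchyDen u + phi (x + u) * cauchyDen u) := by
    rw [integral_add (conv_integrand x) (conv_integrand' x), ← h1]
    unfold conv
    ring
  have h3 : ∫ u, (phi (x - u) * cauchyDen u + phi (x + u) * cauchyDen u)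
      = (2 * phi x) * ∫ u, Real.cosh (x * u) * Real.exp (-u ^ 2 / 2) * cauchyDen u := by
    rw [← integral_const_mul]
    congr 1
    funext u
    rw [← add_mul, phi_shift]
    ring
  have := (phi_pos x).ne'
  rw [div_eq_iff this]
  linarith

lemma betaFn_mono {x y : ℝ} (h : |x| ≤ |y|) : betaFn cauchyDen x ≤ betaFn cauchyDen y := by
  unfold betaFn
  rw [conv_ratio, conv_ratio]
  gcongr
  · exact cosh_integrable x
  · exact cosh_integrable y
  · intro u
    have hc : Real.cosh (x * u) ≤ Real.cosh (y * u) := by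
      rw [Real.cosh_le_cosh, abs_mul, abs_mul]
      gcongr
    have := cauchyDen_pos u
    dsimp only
    gcongr

/-- `k₀ = g(0)/φ(0)`. -/
def k0 : ℝ := conv cauchyDen 0 / phi 0

lemma k0_pos : 0 < k0 :=
  div_pos (lt_of_lt_of_le (mul_pos (phi_pos _) (cauchyDen_pos _)) (conv_lower le_rfl)) (phi_pos _)

lemma k0_le_one : k0 ≤ 1 := by
  unfold k0
  rw [conv_ratio, ← cauchyDen_integral]
  refine integral_mono (cosh_integrable 0) cauchyDen_integrable fun u => ?_
  have : Real.exp (-u ^ 2 / 2) ≤ 1 := Real.exp_le_one_iff.2 (by nlinarith [sq_nonneg u])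
  simp only [zero_mul, Real.cosh_zero, one_mul]
  exact mul_le_of_le_one_left (cauchyDen_pos u).le this

lemma betaFn_lower (x : ℝ) : k0 - 1 ≤ betaFn cauchyDen x :=
  betaFn_mono (by simp)

lemma betaFn_measurable : Measurable (betaFn cauchyDen) := by
  unfold betaFn
  exact (conv_measurable.div phi_continuous.measurable).sub_const 1

lemma betaFn_integrable :
    Integrable (betaFn cauchyDen) (ProbabilityTheory.gaussianReal 0 1) := by
  rw [ProbabilityTheory.gaussianReal_of_var_ne_zero _ (by simp),
    integrable_withDensity_iff_integrable_smul' (ProbabilityTheory.measurable_gaussianPDF _ _)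
      (ae_of_all _ fun x => ProbabilityTheory.gaussianPDF_lt_top)]
  refine (conv_integrable.sub phi_integrable).congr (ae_of_all _ fun x => ?_)
  have := (phi_pos x).ne'
  simp only [ProbabilityTheory.toReal_gaussianPDF, ← phi_eq_pdf, betaFn, smul_eq_mul, Pi.sub_apply]
  field_simp

lemma betaFn_integral : ∫ x, betaFn cauchyDen x ∂(ProbabilityTheory.gaussianReal 0 1) = 0 := by
  rw [ProbabilityTheory.integral_gaussianReal_eq_integral_smul (by simp), ← phi_eq_pdf]
  have : ∀ x, phi x • betaFn cauchyDen x = conv cauchyDen x - phi x := by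
    intro x
    have := (phi_pos x).ne'
    simp only [betaFn, smul_eq_mul]
    field_simp
  simp_rw [this]
  rw [integral_sub conv_integrable phi_integrable, conv_integral, phi_integral, sub_self]

/-- `β(x, α)` -/
def bet (α x : ℝ) : ℝ := betaFn cauchyDen x / (1 + α * betaFn cauchyDen x)

lemma den_lower {α : ℝ} (h0 : 0 < α) (h1 : α ≤ 1) (x : ℝ) : k0 ≤ 1 + α * betaFn cauchyDen x := by
  nlinarith [betaFn_lower x, k0_le_one, k0_pos]

lemma bet_upper {α : ℝ} (h0 : 0 < α) (h1 : α ≤ 1) (x : ℝ) : α * bet α x ≤ 1 := by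
  have h := k0_pos.trans_le (den_lower h0 h1 x)
  unfold bet
  rw [mul_div_assoc', div_le_one h]
  linarith

lemma bet_lower {α : ℝ} (h0 : 0 < α) (h1 : α ≤ 1) (x : ℝ) : -1 ≤ k0 * bet α x := by
  have h := k0_pos.trans_le (den_lower h0 h1 x)
  unfold bet
  rw [mul_div_assoc', le_div_iff₀ h]
  nlinarith [den_lower h0 h1 x, betaFn_lower x, k0_le_one, k0_pos]

lemma bet_sq {α : ℝ} (h0 : 0 < α) (h1 : α ≤ 1) (x : ℝ) :
    k0 * (α * bet α x ^ 2) ≤ betaFn cauchyDen x - bet α x := by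
  have hd := den_lower h0 h1 x
  have h := k0_pos.trans_le hd
  have e : betaFn cauchyDen x - bet α x
      = (1 + α * betaFn cauchyDen x) * (α * bet α x ^ 2) := by
    have hq : bet α x * (1 + α * betaFn cauchyDen x) = betaFn cauchyDen x :=
      div_mul_cancel₀ _ h.ne'
    linear_combination (-1 - α * bet α x) * hq
  rw [e]
  gcongr

lemma bet_measurable (α : ℝ) : Measurable (bet α) := by
  unfold bet
  exact betaFn_measurable.div ((betaFn_measurable.const_mul α).const_add 1)

lemma bet_abs {α : ℝ} (h0 : 0 < α) (h1 : α ≤ 1) (x : ℝ) : |bet α x| ≤ 1 / (k0 * α) := by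
  have hk := k0_pos
  have h2 := bet_upper h0 h1 x
  have h3 := bet_lower h0 h1 x
  have h4 := k0_le_one
  rw [le_div_iff₀ (by positivity)]
  rcases abs_cases (bet α x) with h | h <;> rw [h.1] <;> nlinarith

lemma bet_integrable {α : ℝ} (h0 : 0 < α) (h1 : α ≤ 1) (μ : Measure ℝ) [IsFiniteMeasure μ] :
    Integrable (bet α) μ :=
  Integrable.of_bound (bet_measurable α).aestronglyMeasurable _
    (ae_of_all _ fun x => bet_abs h0 h1 x)

lemma mtilde_eq (α : ℝ) :
    mtilde cauchyDen α = -∫ x, bet α x ∂(ProbabilityTheory.gaussianReal 0 1) := rfl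

lemma mtilde_le {α : ℝ} (h0 : 0 < α) (h1 : α ≤ 1) : mtilde cauchyDen α * k0 ≤ 1 := by
  have h : ∫ _x, (-(1 / k0)) ∂(ProbabilityTheory.gaussianReal 0 1)
      ≤ ∫ x, bet α x ∂(ProbabilityTheory.gaussianReal 0 1) := by
    refine integral_mono (integrable_const _) (bet_integrable h0 h1 _) fun x => ?_
    have := bet_lower h0 h1 x
    have hk := k0_pos
    dsimp only
    rw [neg_le, le_div_iff₀ hk]
    linarith
  rw [integral_const] at h
  simp only [probReal_univ, smul_eq_mul, one_mul] at h
  rw [mtilde_eq, ← le_div_iff₀ k0_pos]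
  linarith

lemma exp_bet_integrable {α : ℝ} (h0 : 0 < α) (h1 : α ≤ 1) (c : ℝ) (μ : Measure ℝ)
    [IsFiniteMeasure μ] : Integrable (fun x => Real.exp (c * bet α x)) μ := by
  refine Integrable.of_bound (C := Real.exp (|c| * (1 / (k0 * α))))
    (((bet_measurable α).const_mul c).exp).aestronglyMeasurable (ae_of_all _ fun x => ?_)
  rw [Real.norm_of_nonneg (Real.exp_pos _).le]
  apply Real.exp_le_exp.2
  calc c * bet α x ≤ |c * bet α x| := le_abs_self _
    _ = |c| * |bet α x| := abs_mul _ _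
    _ ≤ _ := by gcongr; exact bet_abs h0 h1 x

lemma mgf_null {α : ℝ} (h0 : 0 < α) (h1 : α ≤ 1) :
    ∫ x, Real.exp (k0 / 2 * α * bet α x) ∂(ProbabilityTheory.gaussianReal 0 1)
      ≤ Real.exp (-(k0 / 4 * α * mtilde cauchyDen α)) := by
  have hk := k0_pos
  have hb := bet_integrable h0 h1 (ProbabilityTheory.gaussianReal 0 1)
  have hI : Integrable (fun x => 1 + k0 / 2 * α * bet α x
        + k0 / 4 * α * (betaFn cauchyDen x - bet α x)) (ProbabilityTheory.gaussianReal 0 1) :=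
    ((integrable_const _).add (hb.const_mul _)).add ((betaFn_integrable.sub hb).const_mul _)
  have h : ∫ x, Real.exp (k0 / 2 * α * bet α x) ∂(ProbabilityTheory.gaussianReal 0 1)
      ≤ ∫ x, (1 + k0 / 2 * α * bet α x
        + k0 / 4 * α * (betaFn cauchyDen x - bet α x)) ∂(ProbabilityTheory.gaussianReal 0 1) := by
    refine integral_mono (exp_bet_integrable h0 h1 _ _) hI fun x => ?_
    have ha : |k0 / 2 * α * bet α x| ≤ 1 := by
      have := bet_abs h0 h1 x
      rw [le_div_iff₀ (by positivity)] at this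
      rw [abs_mul, abs_of_pos (by positivity)]
      nlinarith
    have h2 := (abs_le.1 (Real.abs_exp_sub_one_sub_id_le ha)).2
    have h3 := mul_le_mul_of_nonneg_left (bet_sq h0 h1 x) (by positivity : 0 ≤ k0 / 4 * α)
    dsimp only
    nlinarith
  have e : ∫ x, (1 + k0 / 2 * α * bet α x
        + k0 / 4 * α * (betaFn cauchyDen x - bet α x)) ∂(ProbabilityTheory.gaussianReal 0 1)
      = 1 - k0 / 4 * α * mtilde cauchyDen α := by
    have i1 : Integrable (fun x => 1 + k0 / 2 * α * bet α x)
        (ProbabilityTheory.gaussianReal 0 1) := (integrable_const _).add (hb.const_mul _)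
    have i2 : Integrable (fun x => k0 / 4 * α * (betaFn cauchyDen x - bet α x))
        (ProbabilityTheory.gaussianReal 0 1) := (betaFn_integrable.sub hb).const_mul _
    rw [integral_add i1 i2,
      integral_add (integrable_const _) (hb.const_mul _), integral_const_mul, integral_const_mul,
      integral_sub betaFn_integrable hb, betaFn_integral, mtilde_eq]
    simp only [integral_const, probReal_univ, smul_eq_mul]
    ring
  rw [e] at h
  have := Real.add_one_le_exp (-(k0 / 4 * α * mtilde cauchyDen α))
  linarith

lemma mgf_signal {α : ℝ} (h0 : 0 < α) (h1 : α ≤ 1) (θ : ℝ) :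
    ∫ x, Real.exp (k0 / 2 * α * bet α x) ∂(ProbabilityTheory.gaussianReal θ 1)
      ≤ Real.exp (k0 / 2) := by
  have h : ∫ x, Real.exp (k0 / 2 * α * bet α x) ∂(ProbabilityTheory.gaussianReal θ 1)
      ≤ ∫ _x, Real.exp (k0 / 2) ∂(ProbabilityTheory.gaussianReal θ 1) := by
    refine integral_mono (exp_bet_integrable h0 h1 _ _) (integrable_const _) fun x => ?_
    apply Real.exp_le_exp.2
    nlinarith [bet_upper h0 h1 x, k0_pos]
  simpa using h

lemma conv_pos (x : ℝ) : 0 < conv cauchyDen x := by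
  have h := betaFn_lower x
  unfold betaFn at h
  have h2 : 0 < conv cauchyDen x / phi x := by linarith [k0_pos]
  have := mul_pos h2 (phi_pos x)
  rwa [div_mul_cancel₀ _ (phi_pos x).ne'] at this

lemma median_bound {α x : ℝ} (h0 : 0 < α) (h1 : α < 1) (hx : 0 ≤ x)
    (hm : medianZero cauchyDen α x) : α * conv cauchyDen x ≤ 2 * phi x := by
  have hg := conv_pos x
  have hp := phi_pos x
  have hD : 0 < (1 - α) * phi x + α * conv cauchyDen x := by
    have : 0 < 1 - α := by linarith
    positivity
  set a := aWt cauchyDen α x with ha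
  have ha' : a = α * conv cauchyDen x / ((1 - α) * phi x + α * conv cauchyDen x) := rfl
  have ha0 : 0 ≤ a := by rw [ha']; positivity
  have ha1 : a ≤ 1 := by
    rw [ha', div_le_one hD]
    nlinarith
  have h := hm.1
  unfold coordPost at h
  rw [withDensity_apply _ measurableSet_Iic, Measure.restrict_add, lintegral_add_measure,
    setLIntegral_dirac] at h
  have hb : ∫⁻ u in Iic 0, ENNReal.ofReal (coordDen cauchyDen α x u)
      ≤ ENNReal.ofReal (a * phi x / conv cauchyDen x) := by
    calc ∫⁻ u in Iic 0, ENNReal.ofReal (coordDen cauchyDen α x u)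
        ≤ ∫⁻ u in Iic 0, ENNReal.ofReal (a * phi x / conv cauchyDen x * cauchyDen u) := by
          refine lintegral_mono_ae ?_
          filter_upwards [ae_restrict_mem measurableSet_Iic,
            ae_restrict_of_ae (Measure.ae_ne volume (0 : ℝ))] with u hu hu0
          apply ENNReal.ofReal_le_ofReal
          unfold coordDen
          rw [if_neg hu0, ← ha]
          have hu' : u ≤ 0 := hu
          have h3 : phi (x - u) ≤ phi x := by
            apply phi_anti
            rw [abs_of_nonneg hx, abs_of_nonneg (by linarith)]
            linarith
          have h4 := (cauchyDen_pos u).le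
          calc a * (phi (x - u) * cauchyDen u / conv cauchyDen x)
              ≤ a * (phi x * cauchyDen u / conv cauchyDen x) := by gcongr
            _ = _ := by ring
      _ ≤ ∫⁻ u, ENNReal.ofReal (a * phi x / conv cauchyDen x * cauchyDen u) :=
          setLIntegral_le_lintegral _ _
      _ = ENNReal.ofReal (a * phi x / conv cauchyDen x) := by
          rw [← ofReal_integral_eq_lintegral_ofReal (cauchyDen_integrable.const_mul _)
            (ae_of_all _ fun u => mul_nonneg (by positivity) (cauchyDen_pos u).le),
            integral_const_mul, cauchyDen_integral, mul_one]
  have hc : coordDen cauchyDen α x 0 = 1 - a := by simp [coordDen, ← ha]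
  rw [if_pos (by simp), hc] at h
  have h5 := h.trans (add_le_add_left hb _)
  rw [← ENNReal.ofReal_add (by positivity) (by linarith)] at h5
  have h6 : (2⁻¹ : ENNReal) = ENNReal.ofReal 2⁻¹ := by
    rw [ENNReal.ofReal_inv_of_pos (by norm_num)]; simp
  rw [h6, ENNReal.ofReal_le_ofReal_iff (by
    have : 0 ≤ a * phi x / conv cauchyDen x := by positivity
    linarith)] at h5
  have h7 : a * phi x / conv cauchyDen x + (1 - a)
      = phi x / ((1 - α) * phi x + α * conv cauchyDen x) := by
    rw [ha']
    generalize conv cauchyDen x = g at *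
    have := hD.ne'
    field_simp
    ring
  rw [h7, le_div_iff₀ hD] at h5
  nlinarith

lemma alphan_bound {α : ℝ} {n : ℕ} (hn : 3 ≤ n) (h0 : 0 < α) (h1 : α < 1)
    (hm : medianZero cauchyDen α (Real.sqrt (2 * Real.log n))) :
    α * n ≤ 100 * (Real.log n) ^ 2 := by
  have hn3 : (3 : ℝ) ≤ n := by exact_mod_cast hn
  have hnpos : (0 : ℝ) < n := by linarith
  have hlog : 1 ≤ Real.log n := by
    rw [Real.le_log_iff_exp_le hnpos]
    linarith [Real.exp_one_lt_d9]
  set x := Real.sqrt (2 * Real.log n) with hx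
  have hx0 : 0 ≤ x := Real.sqrt_nonneg _
  have hx2 : x ^ 2 = 2 * Real.log n := Real.sq_sqrt (by linarith)
  have hb := median_bound h0 h1 hx0 hm
  have hl := conv_lower hx0
  have hb2 : α * (phi 1 * cauchyDen (x + 1)) ≤ 2 * phi x :=
    (mul_le_mul_of_nonneg_left hl h0.le).trans hb
  have hphi : phi x = (n : ℝ)⁻¹ / Real.sqrt (2 * π) := by
    unfold phi
    rw [hx2, show -(2 * Real.log n) / 2 = -Real.log n by ring, Real.exp_neg, Real.exp_log hnpos]
  have hphi1 : phi 1 = Real.exp (-(1 / 2)) / Real.sqrt (2 * π) := by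
    unfold phi; congr 2; norm_num
  have hpi := Real.pi_pos
  have hs : 0 < Real.sqrt (2 * π) := by positivity
  rw [hphi, hphi1] at hb2
  unfold cauchyDen at hb2
  have hP : 0 < π * (1 + (x + 1) ^ 2) := by positivity
  have hb3 : α * n * Real.exp (-(1 / 2)) ≤ 2 * (π * (1 + (x + 1) ^ 2)) := by
    have := mul_le_mul_of_nonneg_left hb2
      (by positivity : 0 ≤ (n : ℝ) * Real.sqrt (2 * π) * (π * (1 + (x + 1) ^ 2)))
    field_simp at this
    field_simp
    nlinarith
  have he : (0.6 : ℝ) ≤ Real.exp (-(1 / 2)) := by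
    rw [Real.exp_neg, le_inv_comm₀ (by norm_num) (Real.exp_pos _)]
    have h2 : Real.exp (1 / 2) ^ 2 < 2.7182818286 := by
      rw [← Real.exp_nat_mul]
      convert Real.exp_one_lt_d9 using 2
      norm_num
    have := Real.exp_pos (1 / 2)
    by_contra hcon
    push Not at hcon
    norm_num at hcon h2
    nlinarith
  have hx3 : 1 + (x + 1) ^ 2 ≤ 7 * (Real.log n) ^ 2 := by
    nlinarith [sq_nonneg (x - 1)]
  have hpi2 : π ≤ 3.15 := Real.pi_lt_d2.le
  have h8 : α * n * 0.6 ≤ 2 * (3.15 * (7 * (Real.log n) ^ 2)) := by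
    calc α * n * 0.6 ≤ α * n * Real.exp (-(1 / 2)) := by gcongr
      _ ≤ _ := hb3
      _ ≤ _ := by gcongr
  nlinarith

lemma score_nonneg {n : ℕ} (X : Fin n → ℝ) {a b : ℝ} (ha : 0 < a) (ha1 : a ≤ 1) (hab : a < b)
    (hb1 : b ≤ 1) (h : logMarg cauchyDen a X ≤ logMarg cauchyDen b X) :
    0 ≤ ∑ i, bet a (X i) := by
  unfold logMarg at h
  have key : ∀ i, Real.log ((1 - b) * phi (X i) + b * conv cauchyDen (X i))
      - Real.log ((1 - a) * phi (X i) + a * conv cauchyDen (X i)) ≤ (b - a) * bet a (X i) := by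
    intro i
    have hp := phi_pos (X i)
    have e : ∀ c, (1 - c) * phi (X i) + c * conv cauchyDen (X i)
        = phi (X i) * (1 + c * betaFn cauchyDen (X i)) := by
      intro c
      unfold betaFn
      field_simp
      ring
    have hda := k0_pos.trans_le (den_lower ha ha1 (X i))
    have hdb := k0_pos.trans_le (den_lower (ha.trans hab) hb1 (X i))
    rw [e, e, Real.log_mul hp.ne' hdb.ne', Real.log_mul hp.ne' hda.ne']
    have := Real.log_le_sub_one_of_pos (div_pos hdb hda)
    rw [Real.log_div hdb.ne' hda.ne'] at this
    have e2 : (1 + b * betaFn cauchyDen (X i)) / (1 + a * betaFn cauchyDen (X i)) - 1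
        = (b - a) * bet a (X i) := by
      have hq : bet a (X i) * (1 + a * betaFn cauchyDen (X i)) = betaFn cauchyDen (X i) :=
        div_mul_cancel₀ _ hda.ne'
      rw [div_sub_one hda.ne', div_eq_iff hda.ne']
      linear_combination (a - b) * hq
    linarith
  have hs := Finset.sum_le_sum (fun i (_ : i ∈ Finset.univ) => key i)
  rw [Finset.sum_sub_distrib, ← Finset.mul_sum] at hs
  have : 0 ≤ (b - a) * ∑ i, bet a (X i) := by linarith
  exact nonneg_of_mul_nonneg_right this (by linarith)

lemma chernoff {n : ℕ} {s : ℕ} {α : ℝ} (h0 : 0 < α) (h1 : α ≤ 1) (hm : 0 ≤ mtilde cauchyDen α)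
    (θ : Fin n → ℝ) (hθ : θ ∈ ell0 n s) :
    Pdata n θ {X : Fin n → ℝ | 0 ≤ ∑ i, bet α (X i)} ≤
      ENNReal.ofReal (Real.exp (k0 / 2 * s - k0 / 4 * α * mtilde cauchyDen α * (n - s))) := by
  classical
  have hk := k0_pos
  set lam := k0 / 2 * α with hlam
  have hlam0 : 0 < lam := by positivity
  have hint : Integrable (fun X : Fin n → ℝ => ∏ i, Real.exp (lam * bet α (X i))) (Pdata n θ) :=
    Integrable.fintype_prod (f := fun _ x => Real.exp (lam * bet α x))
      (fun i => exp_bet_integrable h0 h1 lam _)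
  have hval : ∫ X : Fin n → ℝ, ∏ i, Real.exp (lam * bet α (X i)) ∂(Pdata n θ)
      = ∏ i, ∫ x, Real.exp (lam * bet α x) ∂(ProbabilityTheory.gaussianReal (θ i) 1) :=
    integral_fintype_prod_eq_prod (fun _ x => Real.exp (lam * bet α x))
  have hle : ∏ i, ∫ x, Real.exp (lam * bet α x) ∂(ProbabilityTheory.gaussianReal (θ i) 1)
      ≤ ∏ i, Real.exp (if θ i ≠ 0 then k0 / 2 else -(k0 / 4 * α * mtilde cauchyDen α)) := by
    refine Finset.prod_le_prod (fun i _ => integral_nonneg fun x => (Real.exp_pos _).le) ?_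
    intro i _
    by_cases hi : θ i ≠ 0
    · rw [if_pos hi]; exact mgf_signal h0 h1 (θ i)
    · rw [if_neg hi]
      push Not at hi
      rw [hi]; exact mgf_null h0 h1
  have hcard : ((Finset.univ.filter fun i => θ i ≠ 0).card : ℝ) ≤ s := by
    have h := hθ
    unfold ell0 at h
    rw [mem_ofPred_eq, Nat.card_eq_fintype_card, Fintype.card_subtype] at h
    exact_mod_cast h
  have hcard2 : ((Finset.univ.filter fun i => θ i ≠ 0).card : ℝ)
      + ((Finset.univ.filter fun i => ¬ (θ i ≠ 0)).card : ℝ) = n := by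
    have := Finset.card_filter_add_card_filter_not (s := (Finset.univ : Finset (Fin n)))
      (fun i => θ i ≠ 0)
    rw [Finset.card_univ, Fintype.card_fin] at this
    exact_mod_cast this
  have hle2 : ∏ i, Real.exp (if θ i ≠ 0 then k0 / 2 else -(k0 / 4 * α * mtilde cauchyDen α))
      ≤ Real.exp (k0 / 2 * s - k0 / 4 * α * mtilde cauchyDen α * (n - s)) := by
    rw [← Real.exp_sum, Finset.sum_ite, Finset.sum_const, Finset.sum_const, nsmul_eq_mul,
      nsmul_eq_mul]
    apply Real.exp_le_exp.2
    have hq : 0 ≤ k0 / 4 * α * mtilde cauchyDen α := by positivity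
    generalize ((Finset.univ.filter fun i => θ i ≠ 0).card : ℝ) = p at *
    generalize ((Finset.univ.filter fun i => ¬ (θ i ≠ 0)).card : ℝ) = q at *
    have : (n : ℝ) - s ≤ q := by linarith
    nlinarith
  have hprob : (Pdata n θ) {X : Fin n → ℝ | 0 ≤ ∑ i, bet α (X i)}
      ≤ ∫⁻ X, ENNReal.ofReal (∏ i, Real.exp (lam * bet α (X i))) ∂(Pdata n θ) := by
    have hsub : {X : Fin n → ℝ | 0 ≤ ∑ i, bet α (X i)} ⊆
        {X | 1 ≤ ENNReal.ofReal (∏ i, Real.exp (lam * bet α (X i)))} := by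
      intro X hX
      simp only [mem_ofPred_eq] at hX ⊢
      rw [ENNReal.one_le_ofReal, ← Real.exp_sum, ← Finset.mul_sum]
      exact Real.one_le_exp (mul_nonneg hlam0.le hX)
    refine (measure_mono hsub).trans ?_
    have := mul_meas_ge_le_lintegral₀ (μ := Pdata n θ)
      (f := fun X : Fin n → ℝ => ENNReal.ofReal (∏ i, Real.exp (lam * bet α (X i))))
      hint.aestronglyMeasurable.aemeasurable.ennreal_ofReal 1
    simpa using this
  refine hprob.trans ?_
  rw [← ofReal_integral_eq_lintegral_ofReal hint
    (ae_of_all _ fun X => Finset.prod_nonneg fun i _ => (Real.exp_pos _).le), hval]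
  exact ENNReal.ofReal_le_ofReal (hle.trans hle2)

/-- Lemma 6: no undersmoothing.  With `α₁` defined by
`d α₁ m̃(α₁) = s_n/n` for a small enough constant `d > 0`, `ζ` the
pseudo-threshold (`β(ζ(a)) = 1/a`) and `ĥζ = ζ(ĥα)`, under
`c₁ log² n ≤ s_n ≤ c₀ n` one has
`sup_{θ ∈ ℓ₀[s_n]} P_θ[ĥζ < ζ₁] ≤ exp(-C s_n)`. -/
theorem no_undersmoothing :
    ∃ d > (0 : ℝ), ∃ c0 > (0 : ℝ), ∃ c1 > (0 : ℝ), ∃ C > (0 : ℝ), ∃ N0 : ℕ,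
      ∀ n : ℕ, N0 ≤ n → ∀ s : ℕ,
        c1 * (Real.log n) ^ 2 ≤ (s : ℝ) → (s : ℝ) ≤ c0 * n →
        ∀ ζf : ℝ → ℝ,
          (∀ a ∈ Set.Ioc (0 : ℝ) 1, 0 < ζf a ∧ betaFn cauchyDen (ζf a) = 1 / a) →
        ∀ t : ℝ → ℝ, IsThreshold cauchyDen t →
        ∀ αn : ℝ, αn ∈ Set.Ioo (0 : ℝ) 1 → t αn = Real.sqrt (2 * Real.log n) →
        ∀ hahat : (Fin n → ℝ) → ℝ, IsMMLE cauchyDen αn hahat →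
        ∀ α1 : ℝ, α1 ∈ Set.Ioo (0 : ℝ) 1 →
          d * α1 * mtilde cauchyDen α1 = (s : ℝ) / n →
        ∀ θ ∈ ell0 n s,
          Pdata n θ {X : Fin n → ℝ | ζf (hahat X) < ζf α1} ≤
            ENNReal.ofReal (Real.exp (-C * s)) := by
  have hk := k0_pos
  refine ⟨1 / 16, by norm_num, 1 / 2, by norm_num, 100 / (16 * k0), by positivity, k0 / 2,
    by positivity, 3, ?_⟩
  intro n hn s hs1 hs2 ζf hζ t ht αn hαn htn hahat hmm α1 hα1 heq θ hθ
  have hn3 : (3 : ℝ) ≤ n := by exact_mod_cast hn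
  have hnpos : (0 : ℝ) < n := by linarith
  have hs0 : (0 : ℝ) ≤ s := Nat.cast_nonneg s
  have hmed : medianZero cauchyDen αn (Real.sqrt (2 * Real.log n)) := by
    rw [(ht αn hαn).2, htn, abs_of_nonneg (Real.sqrt_nonneg _)]
  have hb := alphan_bound hn hαn.1 hαn.2 hmed
  have hM := mtilde_le hα1.1 hα1.2.le
  have heq2 : α1 * mtilde cauchyDen α1 * n = 16 * s := by
    rw [eq_div_iff hnpos.ne'] at heq
    linarith
  have hm0 : 0 ≤ mtilde cauchyDen α1 := by
    have h1 : 0 ≤ mtilde cauchyDen α1 * (α1 * n) := by linarith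
    exact nonneg_of_mul_nonneg_left h1 (mul_pos hα1.1 hnpos)
  have hle : αn ≤ α1 := by
    have h1 : 100 * Real.log n ^ 2 ≤ 16 * k0 * s := by
      rw [div_mul_eq_mul_div, div_le_iff₀ (by positivity)] at hs1
      linarith
    have h2 : 16 * k0 * s ≤ α1 * n := by
      have := mul_le_mul_of_nonneg_left hM (mul_pos hα1.1 hnpos).le
      nlinarith
    exact le_of_mul_le_mul_right (hb.trans (h1.trans h2)) hnpos
  have hsub : {X : Fin n → ℝ | ζf (hahat X) < ζf α1} ⊆ {X | 0 ≤ ∑ i, bet α1 (X i)} := by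
    intro X hX
    simp only [mem_ofPred_eq] at hX ⊢
    obtain ⟨hmem, hmax⟩ := hmm.2 X
    have hpos : 0 < hahat X := hαn.1.trans_le hmem.1
    obtain ⟨z1, z2⟩ := hζ (hahat X) ⟨hpos, hmem.2⟩
    obtain ⟨w1, w2⟩ := hζ α1 ⟨hα1.1, hα1.2.le⟩
    have hmono : betaFn cauchyDen (ζf (hahat X)) ≤ betaFn cauchyDen (ζf α1) := by
      apply betaFn_mono
      rw [abs_of_pos z1, abs_of_pos w1]
      exact hX.le
    rw [z2, w2, one_div_le_one_div hpos hα1.1] at hmono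
    have hlt : α1 < hahat X := by
      refine lt_of_le_of_ne hmono fun he => ?_
      rw [← he] at hX
      exact lt_irrefl _ hX
    exact score_nonneg X hα1.1 hα1.2.le hlt hmem.2 (hmax α1 ⟨hle, hα1.2.le⟩)
  refine (measure_mono hsub).trans ((chernoff hα1.1 hα1.2.le hm0 θ hθ).trans ?_)
  apply ENNReal.ofReal_le_ofReal
  apply Real.exp_le_exp.2
  have h3 : 8 * (s : ℝ) ≤ α1 * mtilde cauchyDen α1 * (n - s) := by
    have := mul_nonneg hα1.1.le hm0
    nlinarith
  nlinarith

end
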